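/- Let G be a subgroup of A × B and let N = S_A × S_B where S_A = {(a,1) ∈ G} and S_B = {(1,b) ∈ G}. Then the map φ : G → (G_A/N_A) × (G_B/N_B) sending (a,b) to ([a],[b]) induces an isomorphism of G/N onto its image H = {([a],[b]) : (a,b) ∈ G}. -/

import Mathlib

/-- The natural map `φ : G → (G_A/N_A) × (G_B/N_B)`, `(a,b) ↦ ([a],[b])`,
for subgroups `N ≤ G ≤ A × B`. -/
def goursatMap {A B : Type*} [Group A] [Group B] (G N : Subgroup (A × B))
    [((N.map (MonoidHom.fst A B)).subgroupOf (G.map (MonoidHom.fst A B))).Normal]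
    [((N.map (MonoidHom.snd A B)).subgroupOf (G.map (MonoidHom.snd A B))).Normal] :
    ↥G →*
      (↥(G.map (MonoidHom.fst A B)) ⧸
        (N.map (MonoidHom.fst A B)).subgroupOf (G.map (MonoidHom.fst A B))) ×
      (↥(G.map (MonoidHom.snd A B)) ⧸
        (N.map (MonoidHom.snd A B)).subgroupOf (G.map (MonoidHom.snd A B))) :=
  ((QuotientGroup.mk' _).comp ((MonoidHom.fst A B).subgroupMap G)).prod
    ((QuotientGroup.mk' _).comp ((MonoidHom.snd A B).subgroupMap G))

/-- with `N = S_A × S_B`, the map `φ : G → (G_A/N_A) × (G_B/N_B)`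
has kernel `N`, hence induces an isomorphism of `G/N` onto its image
`H = {([a],[b]) : (a,b) ∈ G}` (the range of `φ`). -/
theorem stmt4 {A B : Type*} [Group A] [Group B] (G N : Subgroup (A × B))
    (hN : ∀ g : A × B, g ∈ N ↔ (g.1, (1 : B)) ∈ G ∧ ((1 : A), g.2) ∈ G)
    [((N.map (MonoidHom.fst A B)).subgroupOf (G.map (MonoidHom.fst A B))).Normal]
    [((N.map (MonoidHom.snd A B)).subgroupOf (G.map (MonoidHom.snd A B))).Normal]
    [(N.subgroupOf G).Normal] :
    (goursatMap G N).ker = N.subgroupOf G ∧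
    Nonempty ((↥G ⧸ N.subgroupOf G) ≃* (goursatMap G N).range) := by
  have hk : (goursatMap G N).ker = N.subgroupOf G := by
    ext x
    rw [MonoidHom.mem_ker, Subgroup.mem_subgroupOf]
    have h1 : goursatMap G N x = 1 ↔
        (x : A × B).1 ∈ N.map (MonoidHom.fst A B) ∧
        (x : A × B).2 ∈ N.map (MonoidHom.snd A B) := by
      rw [Prod.ext_iff]
      exact and_congr (QuotientGroup.eq_one_iff _) (QuotientGroup.eq_one_iff _)
    rw [h1]
    constructor
    · rintro ⟨⟨u, hu, hu1⟩, ⟨v, hv, hv1⟩⟩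
      have e1 : u.1 = (x : A × B).1 := hu1
      have e2 : v.2 = (x : A × B).2 := hv1
      rw [hN, ← e1, ← e2]
      exact ⟨((hN u).1 hu).1, ((hN v).1 hv).2⟩
    · intro h
      exact ⟨⟨_, h, rfl⟩, ⟨_, h, rfl⟩⟩
  exact ⟨hk, ⟨(QuotientGroup.quotientMulEquivOfEq hk.symm).trans
    (QuotientGroup.quotientKerEquivRange (goursatMap G N))⟩⟩
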